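/- For i = 0, 1, 2 and natural numbers n, let N_d(i, 3; n) denote the number of pairs of partitions (α, β) with |α| + |β| = n, where α is an arbitrary partition, β is a partition into parts not congruent to 1 or 5 modulo 6, and the integer (number of even parts of α) − (number of even parts of β) is congruent to i modulo 3. Then for every natural number n, N_d(0, 3; 3n+2) = N_d(1, 3; 3n+2) = N_d(2, 3; 3n+2). -/

import Mathlib

open Finset

/-- `Nd i n` is the number of pairs of partitions `(α, β)` with `|α| + |β| = n`, where `α`
is arbitrary, all parts of `β` are not congruent to `1` or `5` mod `6`, and the pd-rank
(number of even parts of `α` minus number of even parts of `β`) is congruent to `i` mod `3`. -/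
def Nd (i : ℕ) (n : ℕ) : ℕ :=
  ∑ a ∈ Finset.range (n + 1),
    ((Finset.univ : Finset (Nat.Partition a × Nat.Partition (n - a))).filter
      (fun pb =>
        (∀ k ∈ pb.2.parts, k % 6 ≠ 1 ∧ k % 6 ≠ 5) ∧
        (((pb.1.parts.filter (fun k => k % 2 = 0)).card : ℤ) -
            ((pb.2.parts.filter (fun k => k % 2 = 0)).card : ℤ)) ≡ (i : ℤ) [ZMOD 3])).card

/-!
Let `w² + w + 1 = 0`. Weighting each even part of `α` by `w` and each even part of `β` by
`w² = w⁻¹` gives a generating function whose coefficients are `N₀ + N₁ w + N₂ w²`, where `Nᵢ`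
counts the pairs of pd-rank `i` modulo `3`. As `(1 - y)(1 - wy)(1 - w²y) = 1 - y³`, it equals

`∏ (1 - q²ʲ) / ∏ (1 - q²ʲ⁻¹) · ∏ 1 / (1 - q³ᵏ) = (∑ q^(s(s+1)/2)) · ∏ 1 / (1 - q³ᵏ)`

by Gauss's identity. Triangular numbers are never `2` modulo `3`, so no exponent of this product is
`2` modulo `3`, and `N₀ + N₁ w + N₂ w² = 0` in `ℤ[w]` forces `N₀ = N₁ = N₂`.
-/

open Filter Function PowerSeries
open scoped PowerSeries.WithPiTopology Topology

namespace PdRank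

section ShanksIdentity

variable {R : Type*} [CommRing R] (x : R)

/-- The summand in Shanks's finite form of Gauss's triangular number identity. As `n` grows, only
the summand at `s = 0` survives modulo a fixed power of `x`. -/
def shanksTerm (n s : ℕ) : R :=
  (∏ k ∈ Ico s n, (1 - x ^ (2 * k + 2))) * (∏ j ∈ range s, (1 - x ^ (2 * j + 1))) *
    x ^ (s * (2 * n + 1))

lemma shanksTerm_zero_right (n : ℕ) : shanksTerm x n 0 = ∏ k ∈ range n, (1 - x ^ (2 * k + 2)) := by
  simp [shanksTerm]

lemma shanksTerm_self (n : ℕ) :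
    shanksTerm x n n = (∏ j ∈ range n, (1 - x ^ (2 * j + 1))) * x ^ (n * (2 * n + 1)) := by
  simp [shanksTerm]

lemma shanksTerm_succ_left {n s : ℕ} (h : s ≤ n) :
    shanksTerm x (n + 1) s = shanksTerm x n s * (1 - x ^ (2 * n + 2)) * x ^ (2 * s) := by
  unfold shanksTerm
  rw [prod_Ico_succ_top h]
  ring

lemma shanksTerm_succ_right_mul {n s : ℕ} (h : s < n) :
    shanksTerm x n (s + 1) * (1 - x ^ (2 * s + 2)) =
      shanksTerm x n s * (1 - x ^ (2 * s + 1)) * x ^ (2 * n + 1) := by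
  unfold shanksTerm
  rw [prod_eq_prod_Ico_succ_bot h, prod_range_succ]
  ring

lemma sum_shanksTerm_succ_left_sub {n m : ℕ} (h : m ≤ n) :
    ∑ s ∈ range m, (shanksTerm x (n + 1) s - (1 - x ^ (2 * n + 1)) * shanksTerm x n s) =
      shanksTerm x n m * (1 - x ^ (2 * m)) := by
  induction m with
  | zero => simp
  | succ m ih =>
    rw [sum_range_succ, ih (by lia), shanksTerm_succ_left x (by lia), mul_add_one 2 m,
      shanksTerm_succ_right_mul x (by lia)]
    ring

lemma sum_range_two_mul_succ_pow_triangular (n : ℕ) :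
    ∑ s ∈ range (2 * (n + 1)), x ^ (s * (s + 1) / 2) =
      ∑ s ∈ range (2 * n), x ^ (s * (s + 1) / 2) +
        x ^ (n * (2 * n + 1)) * (1 + x ^ (2 * n + 1)) := by
  have h_even : 2 * n * (2 * n + 1) / 2 = n * (2 * n + 1) := by
    rw [mul_assoc, Nat.mul_div_cancel_left _ two_pos]
  have h_odd : (2 * n + 1) * (2 * n + 1 + 1) / 2 = n * (2 * n + 1) + (2 * n + 1) :=
    Nat.div_eq_of_eq_mul_right two_pos (by ring)
  rw [mul_add_one, sum_range_succ, sum_range_succ, h_even, h_odd]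
  ring

theorem prod_odd_mul_sum_pow_triangular (n : ℕ) :
    (∏ j ∈ range n, (1 - x ^ (2 * j + 1))) * ∑ s ∈ range (2 * n), x ^ (s * (s + 1) / 2) =
      ∑ s ∈ range n, shanksTerm x n s := by
  induction n with
  | zero => simp
  | succ n ih =>
    have h := sum_shanksTerm_succ_left_sub x (le_refl n)
    rw [sum_sub_distrib, ← mul_sum, ← ih, shanksTerm_self] at h
    rw [sum_range_two_mul_succ_pow_triangular, prod_range_succ, sum_range_succ,
      shanksTerm_succ_left x le_rfl, shanksTerm_self]
    linear_combination -h

lemma pow_dvd_sum_shanksTerm_sub_prod_even (n : ℕ) :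
    x ^ n ∣ ∑ s ∈ range n, shanksTerm x n s - ∏ k ∈ range n, (1 - x ^ (2 * k + 2)) := by
  cases n with
  | zero => simp
  | succ n =>
    rw [sum_range_succ', shanksTerm_zero_right, add_sub_cancel_right]
    refine dvd_sum fun s _ ↦ Dvd.dvd.mul_left (pow_dvd_pow x ?_) _
    nlinarith

end ShanksIdentity

section Convergence

lemma tendsto_two_mul_add_atTop (c : ℕ) : Tendsto (fun j ↦ 2 * j + c) atTop atTop :=
  tendsto_atTop_mono (fun j ↦ show j ≤ 2 * j + c by lia) tendsto_id

variable {R : Type*} [CommRing R]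

lemma tendsto_order_C_mul_X_pow (c : ℕ → R) {e : ℕ → ℕ} (he : Tendsto e atTop atTop) :
    Tendsto (fun i ↦ (C (c i) * X ^ e i).order) atTop (𝓝 ⊤) := by
  refine ENat.tendsto_nhds_top_iff_natCast_lt.mpr fun n ↦ ?_
  filter_upwards [he.eventually_gt_atTop n] with i hi
  refine (Nat.cast_lt.mpr hi).trans_le (nat_le_order _ _ ?_)
  exact X_pow_dvd_iff.mp (dvd_mul_left _ _)

variable [TopologicalSpace R]

lemma multipliable_one_sub_C_mul_X_pow (c : ℕ → R) {e : ℕ → ℕ} (he : Tendsto e atTop atTop) :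
    Multipliable fun i ↦ 1 - C (c i) * X ^ e i := by
  simpa [sub_eq_add_neg] using
    WithPiTopology.multipliable_one_add_of_tendsto_order_atTop_nhds_top R
      (tendsto_order_C_mul_X_pow (fun i ↦ -c i) he)

lemma multipliable_one_sub_X_pow {e : ℕ → ℕ} (he : Tendsto e atTop atTop) :
    Multipliable fun i ↦ (1 : R⟦X⟧) - X ^ e i := by
  simpa using multipliable_one_sub_C_mul_X_pow (fun _ ↦ (1 : R)) he

lemma summable_X_pow {e : ℕ → ℕ} (he : Tendsto e atTop atTop) :
    Summable fun i ↦ (X : R⟦X⟧) ^ e i :=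
  WithPiTopology.summable_of_tendsto_order_atTop_nhds_top R
    (by simpa using tendsto_order_C_mul_X_pow (fun _ ↦ (1 : R)) he)

lemma tendsto_of_X_pow_dvd_sub {f g : ℕ → R⟦X⟧} {a : R⟦X⟧}
    (hfg : ∀ n, X ^ n ∣ f n - g n) (hg : Tendsto g atTop (𝓝 a)) : Tendsto f atTop (𝓝 a) := by
  rw [WithPiTopology.tendsto_iff_coeff_tendsto] at hg ⊢
  refine fun d ↦ (hg d).congr' ?_
  filter_upwards [eventually_gt_atTop d] with n hn
  exact (sub_eq_zero.mp (by simpa using X_pow_dvd_iff.mp (hfg n) d hn)).symm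

end Convergence

section GaussIdentity

lemma tendsto_triangular_atTop : Tendsto (fun s : ℕ ↦ s * (s + 1) / 2) atTop atTop := by
  refine tendsto_atTop_mono (fun s ↦ ?_) tendsto_id
  rw [id, Nat.le_div_iff_mul_le two_pos]
  cases s <;> nlinarith

lemma triangular_mod_three_ne_two (s : ℕ) : s * (s + 1) / 2 % 3 ≠ 2 := by
  intro h
  have h_double : s * (s + 1) / 2 * 2 = s * (s + 1) :=
    Nat.div_mul_cancel (Nat.even_mul_succ_self s).two_dvd
  have h_mod : s * (s + 1) % 3 = 1 := by lia
  have h_res : s % 3 = 0 ∨ s % 3 = 1 ∨ s % 3 = 2 := by lia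
  rcases h_res with h_res | h_res | h_res <;> simp [Nat.mul_mod, Nat.add_mod, h_res] at h_mod

variable (R : Type*) [CommRing R] [TopologicalSpace R]

/-- Ramanujan's theta function `ψ(q) = ∑ q ^ (s (s + 1) / 2)`, the generating function of the
triangular numbers. -/
noncomputable def triangularSeries : R⟦X⟧ :=
  ∑' s : ℕ, X ^ (s * (s + 1) / 2)

lemma coeff_triangularSeries_eq_zero [T2Space R] {n : ℕ} (hn : n % 3 = 2) :
    coeff n (triangularSeries R) = 0 := by
  have h_ne (s : ℕ) : n ≠ s * (s + 1) / 2 := fun h ↦ triangular_mod_three_ne_two s (h ▸ hn)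
  rw [triangularSeries,
    (summable_X_pow tendsto_triangular_atTop).map_tsum _ (WithPiTopology.continuous_coeff R n)]
  simp [coeff_X_pow, h_ne]

theorem tprod_odd_mul_triangularSeries [IsTopologicalRing R] [T2Space R] :
    (∏' j : ℕ, (1 - X ^ (2 * j + 1))) * triangularSeries R = ∏' j : ℕ, (1 - X ^ (2 * j + 2)) := by
  have h_odd := (multipliable_one_sub_X_pow (R := R)
    (tendsto_two_mul_add_atTop 1)).hasProd.tendsto_prod_nat
  have h_even := (multipliable_one_sub_X_pow (R := R)
    (tendsto_two_mul_add_atTop 2)).hasProd.tendsto_prod_nat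
  have h_tri := (summable_X_pow (R := R)
    tendsto_triangular_atTop).hasSum.tendsto_sum_nat.comp (tendsto_two_mul_add_atTop 0)
  refine tendsto_nhds_unique (h_odd.mul h_tri) (tendsto_of_X_pow_dvd_sub (fun n ↦ ?_) h_even)
  rw [comp_apply, add_zero, prod_odd_mul_sum_pow_triangular]
  exact pow_dvd_sum_shanksTerm_sub_prod_even X n

end GaussIdentity

section PartitionWeights

lemma prod_map_ite_one {ι M : Type*} [CommMonoid M] (p : ι → Prop) [DecidablePred p] (w : M)
    (s : Multiset ι) : (s.map fun k ↦ if p k then w else 1).prod = w ^ (s.filter p).card := by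
  induction s using Multiset.induction_on with
  | empty => simp
  | cons a s ih =>
    by_cases ha : p a <;> simp [ha, ih, pow_succ']

lemma prod_map_ite_zero {ι M : Type*} [CommMonoidWithZero M] (p : ι → Prop) [DecidablePred p]
    (h : ι → M) (s : Multiset ι) :
    (s.map fun k ↦ if p k then h k else 0).prod = if ∀ k ∈ s, p k then (s.map h).prod else 0 := by
  induction s using Multiset.induction_on with
  | empty => simp
  | cons a s ih =>
    by_cases ha : p a <;> simp [ha, ih]

variable {R : Type*} [CommRing R]

/-- The generating function of partitions, a partition being weighted by the product of the weights
`h k` of its parts `k`. -/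
noncomputable def weightedGenFun (h : ℕ → R) : R⟦X⟧ :=
  Nat.Partition.genFun fun k c ↦ h k ^ c

lemma coeff_weightedGenFun (h : ℕ → R) (n : ℕ) :
    coeff n (weightedGenFun h) = ∑ p : n.Partition, (p.parts.map h).prod := by
  simp [weightedGenFun, prod_multiset_map_count, Finsupp.prod]

lemma coeff_weightedGenFun_ite_dvd_eq_zero {d n : ℕ} (hn : ¬d ∣ n) (h : ℕ → R) :
    coeff n (weightedGenFun fun k ↦ if d ∣ k then h k else 0) = 0 := by
  rw [coeff_weightedGenFun]
  refine sum_eq_zero fun p _ ↦ ?_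
  rw [prod_map_ite_zero, if_neg]
  exact fun h_parts ↦ hn (p.parts_sum ▸ Multiset.dvd_sum h_parts)

variable [TopologicalSpace R] [IsTopologicalRing R] [T2Space R]

lemma one_add_tsum_pow_smul_X_pow_mul (a : R) (k : ℕ) :
    (1 + ∑' j : ℕ, a ^ (j + 1) • (X : R⟦X⟧) ^ ((k + 1) * (j + 1))) *
      (1 - C a * X ^ (k + 1)) = 1 := by
  have h_const : constantCoeff (C a * X ^ (k + 1)) = 0 := by simp
  have h_geom := WithPiTopology.tsum_pow_mul_one_sub_of_constantCoeff_eq_zero h_const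
  rw [(WithPiTopology.summable_pow_of_constantCoeff_eq_zero h_const).tsum_eq_zero_add,
    pow_zero] at h_geom
  simpa [mul_pow, ← pow_mul, smul_eq_C_mul] using h_geom

lemma weightedGenFun_mul_tprod (h : ℕ → R) :
    weightedGenFun h * ∏' i, (1 - C (h (i + 1)) * X ^ (i + 1)) = 1 := by
  have h_prod := (Nat.Partition.hasProd_genFun fun k c ↦ h k ^ c).mul
    (multipliable_one_sub_C_mul_X_pow (fun i ↦ h (i + 1)) (tendsto_add_atTop_nat 1)).hasProd
  simp only [one_add_tsum_pow_smul_X_pow_mul] at h_prod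
  exact h_prod.unique hasProd_one

lemma weightedGenFun_mul_tprod_odd_mul_tprod_even (h : ℕ → R) :
    weightedGenFun h * ((∏' j, (1 - C (h (2 * j + 1)) * X ^ (2 * j + 1))) *
      ∏' j, (1 - C (h (2 * j + 2)) * X ^ (2 * j + 2))) = 1 := by
  refine (congrArg (weightedGenFun h * ·) ?_).trans (weightedGenFun_mul_tprod h)
  exact tprod_even_mul_odd (f := fun i ↦ 1 - C (h (i + 1)) * X ^ (i + 1))
    (multipliable_one_sub_C_mul_X_pow _ (tendsto_two_mul_add_atTop 1))
    (multipliable_one_sub_C_mul_X_pow _ (tendsto_two_mul_add_atTop 2))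

end PartitionWeights

section PdRankGenFun

variable {R : Type*} [CommRing R]

/-- The weight of a part of `α`: each even part contributes a factor `w`. -/
def evenWeight (w : R) (k : ℕ) : R :=
  if k % 2 = 0 then w else 1

lemma evenWeight_odd (w : R) (j : ℕ) : evenWeight w (2 * j + 1) = 1 :=
  if_neg (by lia)

lemma evenWeight_even (w : R) (j : ℕ) : evenWeight w (2 * j + 2) = w :=
  if_pos (by lia)

/-- The weight of a part of `β`: as `evenWeight`, but zero on the excluded residues modulo `6`. -/
def restrictedEvenWeight (w : R) (k : ℕ) : R :=
  if k % 6 ≠ 1 ∧ k % 6 ≠ 5 then evenWeight w k else 0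

lemma restrictedEvenWeight_odd (w : R) (j : ℕ) :
    restrictedEvenWeight w (2 * j + 1) = if 3 ∣ 2 * j + 1 then 1 else 0 := by
  rw [restrictedEvenWeight, evenWeight_odd]
  exact if_congr (by lia) rfl rfl

lemma restrictedEvenWeight_even (w : R) (j : ℕ) : restrictedEvenWeight w (2 * j + 2) = w := by
  rw [restrictedEvenWeight, evenWeight_even, if_pos (by lia)]

/-- The generating function of the pairs `(α, β)` weighted by `w` to the power of the pd-rank, for
`w` a cube root of unity, whose inverse is written `w ^ 2`. -/
noncomputable def pdRankGenFun (w : R) : R⟦X⟧ :=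
  weightedGenFun (evenWeight w) * weightedGenFun (restrictedEvenWeight (w ^ 2))

lemma pow_mul_sq_pow_eq_sum_modEq {w : R} (hw : w ^ 3 = 1) (a b : ℕ) :
    w ^ a * (w ^ 2) ^ b = ∑ i ∈ range 3, if (a : ℤ) - b ≡ i [ZMOD 3] then w ^ i else 0 := by
  have h_modEq (i : ℕ) (hi : i ∈ range 3) :
      (a : ℤ) - b ≡ i [ZMOD 3] ↔ (a + 2 * b) % 3 = i := by
    rw [mem_range] at hi
    unfold Int.ModEq
    lia
  calc
    w ^ a * (w ^ 2) ^ b = w ^ ((a + 2 * b) % 3) := by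
      rw [← pow_mul, ← pow_add, pow_eq_pow_mod _ hw]
    _ = ∑ i ∈ range 3, if (a + 2 * b) % 3 = i then w ^ i else 0 := by
      rw [sum_ite_eq, if_pos (mem_range.mpr (Nat.mod_lt _ three_pos))]
    _ = _ := sum_congr rfl fun i hi ↦ if_congr (h_modEq i hi).symm rfl rfl

lemma natCast_Nd_mul (i n : ℕ) (x : R) :
    (Nd i n : R) * x = ∑ a ∈ range (n + 1), ∑ p : a.Partition, ∑ q : (n - a).Partition,
      if ∀ k ∈ q.parts, k % 6 ≠ 1 ∧ k % 6 ≠ 5 then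
        if ((p.parts.filter (fun k ↦ k % 2 = 0)).card : ℤ) -
          (q.parts.filter (fun k ↦ k % 2 = 0)).card ≡ i [ZMOD 3] then x else 0
      else 0 := by
  rw [Nd, Nat.cast_sum, sum_mul]
  refine sum_congr rfl fun a _ ↦ ?_
  simp_rw [← nsmul_eq_mul, ← sum_const, sum_filter, Fintype.sum_prod_type, ite_and]

theorem coeff_pdRankGenFun {w : R} (hw : w ^ 3 = 1) (n : ℕ) :
    coeff n (pdRankGenFun w) = ∑ i ∈ range 3, Nd i n * w ^ i := by
  simp_rw [natCast_Nd_mul, pdRankGenFun, coeff_mul, Nat.sum_antidiagonal_eq_sum_range_succ_mk,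
    coeff_weightedGenFun, sum_mul_sum, sum_comm (s := range 3)]
  refine sum_congr rfl fun a _ ↦ sum_congr rfl fun p _ ↦ sum_congr rfl fun q _ ↦ ?_
  unfold restrictedEvenWeight evenWeight
  rw [prod_map_ite_zero, prod_map_ite_one, prod_map_ite_one]
  split_ifs
  · exact pow_mul_sq_pow_eq_sum_modEq hw _ _
  · simp

lemma one_sub_mul_one_sub_mul_one_sub {w : R} (hw : 1 + w + w ^ 2 = 0) (y : R) :
    (1 - y) * (1 - w * y) * (1 - w ^ 2 * y) = 1 - y ^ 3 := by
  linear_combination (-y + w * y ^ 2 - (w - 1) * y ^ 3) * hw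

section Topology

variable [TopologicalSpace R]

lemma tprod_even_ite_three_dvd :
    ∏' j : ℕ, ((1 : R⟦X⟧) - C (if 3 ∣ 2 * j + 2 then 1 else 0) * X ^ (2 * j + 2)) =
      ∏' j : ℕ, (1 - (X ^ (2 * j + 2)) ^ 3) := by
  have h_inj : Injective fun j : ℕ ↦ 3 * j + 2 := fun a b h ↦ by simpa using h
  rw [← h_inj.tprod_eq]
  · refine tprod_congr fun j ↦ ?_
    rw [if_pos (by lia), map_one, one_mul, ← pow_mul]
    ring
  · intro j hj
    have h_dvd : 3 ∣ 2 * j + 2 := by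
      by_contra h
      simp [h] at hj
    exact ⟨j / 3, by lia⟩

variable [IsTopologicalRing R] [T2Space R]

lemma tprod_even_mul_tprod_root_mul_tprod_root_sq {w : R} (hw : 1 + w + w ^ 2 = 0) :
    (∏' j : ℕ, (1 - X ^ (2 * j + 2))) * (∏' j : ℕ, (1 - C w * X ^ (2 * j + 2))) *
      (∏' j : ℕ, (1 - C (w ^ 2) * X ^ (2 * j + 2))) =
        ∏' j : ℕ, (1 - (X ^ (2 * j + 2)) ^ 3) := by
  have h_one := multipliable_one_sub_X_pow (R := R) (tendsto_two_mul_add_atTop 2)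
  have h_mul (a : R) := multipliable_one_sub_C_mul_X_pow (fun _ ↦ a) (tendsto_two_mul_add_atTop 2)
  have hCw : 1 + C w + C w ^ 2 = (0 : R⟦X⟧) := by simpa using congrArg C hw
  rw [← h_one.tprod_mul (h_mul w), ← (h_one.mul (h_mul w)).tprod_mul (h_mul (w ^ 2))]
  simp_rw [map_pow, one_sub_mul_one_sub_mul_one_sub hCw]

theorem pdRankGenFun_eq_triangularSeries_mul {w : R} (hw : 1 + w + w ^ 2 = 0) :
    pdRankGenFun w =
      triangularSeries R * weightedGenFun fun k ↦ if 3 ∣ k then 1 else 0 := by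
  have h_alpha := weightedGenFun_mul_tprod_odd_mul_tprod_even (evenWeight w)
  have h_beta := weightedGenFun_mul_tprod_odd_mul_tprod_even (restrictedEvenWeight (w ^ 2))
  have h_three := weightedGenFun_mul_tprod_odd_mul_tprod_even
    fun k ↦ if 3 ∣ k then (1 : R) else 0
  simp only [evenWeight_odd, evenWeight_even, map_one, one_mul] at h_alpha
  simp only [restrictedEvenWeight_odd, restrictedEvenWeight_even] at h_beta
  rw [tprod_even_ite_three_dvd, ← tprod_even_mul_tprod_root_mul_tprod_root_sq hw,
    ← tprod_odd_mul_triangularSeries] at h_three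
  set A := weightedGenFun (evenWeight w)
  set B := weightedGenFun (restrictedEvenWeight (w ^ 2))
  set T := weightedGenFun fun k ↦ if 3 ∣ k then (1 : R) else 0
  set P := ∏' j : ℕ, (1 - (X : R⟦X⟧) ^ (2 * j + 1))
  set Q := ∏' j : ℕ, (1 - C (if 3 ∣ 2 * j + 1 then (1 : R) else 0) * X ^ (2 * j + 1))
  set E₁ := ∏' j : ℕ, (1 - C w * X ^ (2 * j + 2))
  set E₂ := ∏' j : ℕ, (1 - C (w ^ 2) * X ^ (2 * j + 2))
  calc
    A * B = A * B * (T * (Q * (P * triangularSeries R * E₁ * E₂))) := by rw [h_three, mul_one]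
    _ = triangularSeries R * T * ((A * (P * E₁)) * (B * (Q * E₂))) := by ring
    _ = triangularSeries R * T := by rw [h_alpha, h_beta, mul_one, mul_one]

end Topology

theorem coeff_pdRankGenFun_eq_zero {w : R} (hw : 1 + w + w ^ 2 = 0) {n : ℕ} (hn : n % 3 = 2) :
    coeff n (pdRankGenFun w) = 0 := by
  let : TopologicalSpace R := ⊥
  have : DiscreteTopology R := ⟨rfl⟩
  rw [pdRankGenFun_eq_triangularSeries_mul hw, coeff_mul]
  refine sum_eq_zero fun ⟨a, b⟩ hab ↦ ?_
  rw [HasAntidiagonal.mem_antidiagonal] at hab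
  dsimp only at hab ⊢
  by_cases hb : 3 ∣ b
  · rw [coeff_triangularSeries_eq_zero R (by lia), zero_mul]
  · rw [coeff_weightedGenFun_ite_dvd_eq_zero hb, mul_zero]

end PdRankGenFun

section EisensteinIntegers

open QuadraticAlgebra

/-- The Eisenstein integers `ℤ[ω]`, presented by `ω ^ 2 = -1 - ω`; since `1` and `ω` form a basis,
identities between coordinates can be read off. -/
abbrev EisensteinInt : Type :=
  QuadraticAlgebra ℤ (-1) (-1)

lemma one_add_omega_add_omega_sq : 1 + ω + ω ^ 2 = (0 : EisensteinInt) := by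
  ext <;> simp [pow_two]

lemma omega_pow_three : (ω : EisensteinInt) ^ 3 = 1 := by
  linear_combination (ω - 1) * one_add_omega_add_omega_sq

lemma sum_mul_omega_pow (a : ℕ → ℤ) :
    ∑ i ∈ range 3, (a i : EisensteinInt) * ω ^ i = ⟨a 0 - a 2, a 1 - a 2⟩ := by
  ext <;> simp [sum_range_succ, pow_two] <;> ring

lemma eq_of_sum_mul_omega_pow_eq_zero {a : ℕ → ℤ}
    (h : ∑ i ∈ range 3, (a i : EisensteinInt) * ω ^ i = 0) : a 0 = a 1 ∧ a 1 = a 2 := by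
  obtain ⟨h_re, h_im⟩ := QuadraticAlgebra.ext_iff.mp (sum_mul_omega_pow a ▸ h)
  rw [re_zero] at h_re
  rw [im_zero] at h_im
  lia

end EisensteinIntegers

end PdRank

theorem pd_rank_equidistribution (n : ℕ) :
    Nd 0 (3 * n + 2) = Nd 1 (3 * n + 2) ∧ Nd 1 (3 * n + 2) = Nd 2 (3 * n + 2) := by
  have h_coeff := PdRank.coeff_pdRankGenFun PdRank.omega_pow_three (3 * n + 2)
  have h_zero := PdRank.coeff_pdRankGenFun_eq_zero PdRank.one_add_omega_add_omega_sq
    (show (3 * n + 2) % 3 = 2 by lia)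
  have h_eq := PdRank.eq_of_sum_mul_omega_pow_eq_zero (a := fun i ↦ Nd i (3 * n + 2))
    (by simpa only [Int.cast_natCast] using h_coeff.symm.trans h_zero)
  exact_mod_cast h_eq
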